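/- Let F ⊆ R(Q,−k) be a finite set containing exactly one element of each Γ_Q-orbit of R(Q,−k). Then for every t > 0, each set {g ∈ Γ_Q : |(g·y)_{n+1}| ≤ t} (y ∈ F) is finite, and N_t(Q,−k) = Σ_{y∈F} #{g ∈ Γ_Q : |(g·y)_{n+1}| ≤ t} / #Γ_{Q,y}, where Γ_{Q,y} := {g ∈ Γ_Q : g·y = y}. (This is the distance-free form of the identity N_t(Q,−k) = Σ_{y∈F} |Γ_{Q,y}|^{−1} #{g ∈ Γ_Q : d([e_{n+1}], g·[y]) ≤ s}, since cosh d([e_{n+1}], g·[y]) = √(a/k)·|(g·y)_{n+1}| in the hyperbolic metric.) -/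

import Mathlib

open Matrix

/-!
The fibres of `g ↦ g • y` are cosets of the stabilizer of `y`. Hence the number of points of a
finite set `X` is the sum, over orbit representatives `y`, of the number of `g` carrying `y` into
`X` divided by the order of the stabilizer of `y`.

The stabilizers are finite because an isometry of `Q` fixing a vector `y` with `Q[y] < 0` also
preserves the form `v ↦ -Q[y] Q[v] + 2 (vᵀQy)²`. This form is positive definite, since `Q` is
positive on the orthogonal complement of `y`, and a positive definite integral form has finitely
many isometries because each of its sublevel sets is finite.
-/

open scoped Matrix.Module

section OrbitCounting

open MulAction

variable {G α : Type*} [Group G] [MulAction G α]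

/-- The elements of `G` carrying `y` into `X`, as pairs of an element of the stabilizer of `y` and a
point of `X` in the orbit of `y`. The bijection depends on a choice of coset representatives. -/
noncomputable def setOfSMulMemEquiv (y : α) (X : Set α) :
    {g : G | g • y ∈ X} ≃ stabilizer G y × ↥(X ∩ orbit G y) :=
  (QuotientGroup.preimageMkEquivSubgroupProdSet (stabilizer G y)
    (ofQuotientStabilizer G y ⁻¹' X)).trans <|
  (Equiv.refl _).prodCongr <| Equiv.ofBijective
    (fun q => ⟨ofQuotientStabilizer G y q, q.2, ofQuotientStabilizer_mem_orbit G y q⟩)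
    ⟨fun _ _ h => Subtype.ext (injective_ofQuotientStabilizer G y (congrArg Subtype.val h)), by
      rintro ⟨_, hX, g, rfl⟩
      exact ⟨⟨g, hX⟩, rfl⟩⟩

theorem finite_setOf_smul_mem {y : α} [Finite (stabilizer G y)] {X : Set α} (hX : X.Finite) :
    {g : G | g • y ∈ X}.Finite :=
  have := (hX.inter_of_left (orbit G y)).to_subtype
  .of_equiv _ (setOfSMulMemEquiv y X).symm

theorem natCard_setOf_smul_mem (y : α) (X : Set α) :
    Nat.card {g : G | g • y ∈ X} = Nat.card (stabilizer G y) * Nat.card ↥(X ∩ orbit G y) := by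
  rw [Nat.card_congr (setOfSMulMemEquiv y X), Nat.card_prod]

theorem natCard_eq_sum_natCard_inter_orbit {X : Set α} (hX : X.Finite) {F : Finset α}
    (hF : ∀ x ∈ X, ∃! y, y ∈ F ∧ x ∈ orbit G y) :
    Nat.card X = ∑ y ∈ F, Nat.card ↥(X ∩ orbit G y) := by
  have hunion : X = ⋃ y ∈ (F : Set α), X ∩ orbit G y := by
    rw [← Set.inter_iUnion₂, eq_comm, Set.inter_eq_left]
    exact fun x hx => Set.mem_iUnion₂.mpr (by simpa using (hF x hx).exists)
  have hdisj : (F : Set α).PairwiseDisjoint fun y => X ∩ orbit G y :=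
    fun y hy z hz hyz => Set.disjoint_left.mpr fun x hxy hxz =>
      hyz ((hF x hxy.1).unique ⟨hy, hxy.2⟩ ⟨hz, hxz.2⟩)
  conv_lhs => rw [hunion]
  rw [Nat.card_coe_set_eq,
    F.finite_toSet.ncard_biUnion (fun y _ => hX.inter_of_left (orbit G y)) hdisj,
    finsum_mem_coe_finset]
  simp only [Nat.card_coe_set_eq]

theorem natCard_eq_sum_natCard_div_natCard_stabilizer {K : Type*} [DivisionRing K] [CharZero K]
    {X : Set α} (hX : X.Finite) {F : Finset α} (hF : ∀ x ∈ X, ∃! y, y ∈ F ∧ x ∈ orbit G y)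
    (hstab : ∀ y ∈ F, Finite (stabilizer G y)) :
    (Nat.card X : K) =
      ∑ y ∈ F, (Nat.card {g : G | g • y ∈ X} : K) / (Nat.card (stabilizer G y) : K) := by
  rw [natCard_eq_sum_natCard_inter_orbit hX hF, Nat.cast_sum]
  refine Finset.sum_congr rfl fun y hy => ?_
  have := hstab y hy
  have hne : (Nat.card (stabilizer G y) : K) ≠ 0 := Nat.cast_ne_zero.mpr Nat.card_pos.ne'
  rw [natCard_setOf_smul_mem, Nat.cast_mul, Nat.cast_comm, mul_div_cancel_right₀ _ hne]

end OrbitCounting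

theorem dotProduct_mulVec_comm_of_isSymm {m R : Type*} [Fintype m] [CommSemiring R]
    {S : Matrix m m R} (hS : S.IsSymm) (x y : m → R) : x ⬝ᵥ S *ᵥ y = y ⬝ᵥ S *ᵥ x := by
  rw [dotProduct_mulVec, ← mulVec_transpose, hS.eq, dotProduct_comm]

section PositiveForms

variable {m R : Type*} [Fintype m] [CommRing R] [LinearOrder R] [IsStrictOrderedRing R]
  [StarRing R] [TrivialStar R] {S : Matrix m m R}

theorem sq_dotProduct_mulVec_le_of_posSemidef (hS : S.PosSemidef) (x y : m → R) :
    (x ⬝ᵥ S *ᵥ y) ^ 2 ≤ (x ⬝ᵥ S *ᵥ x) * (y ⬝ᵥ S *ᵥ y) := by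
  classical
  have hnonneg (z : m → R) : 0 ≤ S.toBilin' z z := by
    simpa [toBilin'_apply'] using hS.dotProduct_mulVec_nonneg z
  have hsymm : LinearMap.IsSymm S.toBilin' :=
    ⟨(isSymm_toBilin'_iff_isSymm.mpr (isHermitian_iff_isSymm.mp hS.isHermitian)).eq⟩
  simpa only [toBilin'_apply'] using S.toBilin'.apply_sq_le_of_symm hnonneg hsymm x y

theorem finite_setOf_dotProduct_mulVec_le_of_posDef {S : Matrix m m ℤ} (hS : S.PosDef) (C : ℤ) :
    {x : m → ℤ | x ⬝ᵥ S *ᵥ x ≤ C}.Finite := by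
  classical
  have hinj : Function.Injective fun x : m → ℤ => S *ᵥ x := by
    intro x y hxy
    by_contra hne
    have hpos := hS.dotProduct_mulVec_pos (sub_ne_zero.mpr hne)
    rw [mulVec_sub, sub_eq_zero.mpr hxy, dotProduct_zero] at hpos
    exact hpos.false
  have hentry {x : m → ℤ} (hx : x ⬝ᵥ S *ᵥ x ≤ C) (i : m) : |(S *ᵥ x) i| ≤ S i i * C := by
    have hcs := sq_dotProduct_mulVec_le_of_posSemidef hS.posSemidef (Pi.single i 1) x
    simp only [single_one_dotProduct, mulVec_single_one, col_apply] at hcs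
    calc |(S *ᵥ x) i| ≤ |(S *ᵥ x) i| ^ 2 := Int.le_self_sq _
      _ = (S *ᵥ x) i ^ 2 := sq_abs _
      _ ≤ S i i * (x ⬝ᵥ S *ᵥ x) := hcs
      _ ≤ S i i * C := mul_le_mul_of_nonneg_left hx hS.posSemidef.diag_nonneg
  refine .of_finite_image ((Set.finite_Icc (fun i => -(S i i * C)) fun i => S i i * C).subset ?_)
    hinj.injOn
  rintro _ ⟨x, hx, rfl⟩
  exact ⟨fun i => (abs_le.mp (hentry hx i)).1, fun i => (abs_le.mp (hentry hx i)).2⟩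

end PositiveForms

section IsometryGroup

variable {m R : Type*} [Fintype m] [DecidableEq m] [CommRing R]

/-- The group `Γ_Q` of isometries of the bilinear form with Gram matrix `Q`. -/
def isometryGroup (Q : Matrix m m R) : Subgroup (GL m R) where
  carrier := {g | (g : Matrix m m R)ᵀ * Q * g = Q}
  one_mem' := by simp
  mul_mem' {g h} hg hh := by
    calc ((g * h : GL m R) : Matrix m m R)ᵀ * Q * (g * h : GL m R)
        = (h : Matrix m m R)ᵀ * ((g : Matrix m m R)ᵀ * Q * g) * h := by
          simp only [Units.val_mul, transpose_mul, Matrix.mul_assoc]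
      _ = Q := by rw [hg, hh]
  inv_mem' {g} hg := by
    have hcancel : ((g⁻¹ : GL m R) : Matrix m m R)ᵀ * (g : Matrix m m R)ᵀ = 1 := by
      rw [← transpose_mul, Units.mul_inv, transpose_one]
    calc ((g⁻¹ : GL m R) : Matrix m m R)ᵀ * Q * (g⁻¹ : GL m R)
        = ((g⁻¹ : GL m R) : Matrix m m R)ᵀ * ((g : Matrix m m R)ᵀ * Q * g) * (g⁻¹ : GL m R) := by
          rw [hg]
      _ = Q := by
          rw [Matrix.mul_assoc, Matrix.mul_assoc, Units.mul_inv, Matrix.mul_one,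
            ← Matrix.mul_assoc, hcancel, Matrix.one_mul]

variable {Q : Matrix m m R}

theorem mem_isometryGroup_iff {g : GL m R} :
    g ∈ isometryGroup Q ↔ (g : Matrix m m R)ᵀ * Q * g = Q :=
  Iff.rfl

theorem dotProduct_mulVec_of_mem_isometryGroup {g : GL m R} (hg : g ∈ isometryGroup Q)
    (x y : m → R) : (g.1 *ᵥ x) ⬝ᵥ Q *ᵥ (g.1 *ᵥ y) = x ⬝ᵥ Q *ᵥ y := by
  conv_rhs => rw [← mem_isometryGroup_iff.mp hg]
  simp only [← mulVec_mulVec]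
  rw [dotProduct_mulVec x, vecMul_transpose]

theorem setOf_isUnit_det_and_isometry_eq_image (Q : Matrix m m R) (p : Matrix m m R → Prop) :
    {g : Matrix m m R | IsUnit g.det ∧ gᵀ * Q * g = Q ∧ p g} =
      (fun g : isometryGroup Q => (g.1 : Matrix m m R)) '' {g | p g.1} := by
  ext g
  constructor
  · rintro ⟨hdet, hg, hp⟩
    exact ⟨⟨GeneralLinearGroup.mk'' g hdet, hg⟩, hp, rfl⟩
  · rintro ⟨g, hp, rfl⟩
    exact ⟨(isUnit_iff_isUnit_det _).mp g.1.isUnit, g.2, hp⟩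

theorem natCard_setOf_isUnit_det_and_isometry (Q : Matrix m m R) (p : Matrix m m R → Prop) :
    Nat.card {g : Matrix m m R | IsUnit g.det ∧ gᵀ * Q * g = Q ∧ p g} =
      Nat.card {g : isometryGroup Q | p g.1} := by
  rw [setOf_isUnit_det_and_isometry_eq_image]
  exact Nat.card_image_of_injective (Units.val_injective.comp Subtype.val_injective) _

theorem mem_orbit_isometryGroup_iff {x y : m → R} :
    x ∈ MulAction.orbit (isometryGroup Q) y ↔
      ∃ g : Matrix m m R, IsUnit g.det ∧ gᵀ * Q * g = Q ∧ g *ᵥ y = x := by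
  constructor
  · rintro ⟨g, rfl⟩
    exact ⟨g.1.1, (isUnit_iff_isUnit_det _).mp g.1.isUnit, g.2, rfl⟩
  · rintro ⟨g, hdet, hg, rfl⟩
    exact ⟨⟨GeneralLinearGroup.mk'' g hdet, hg⟩, rfl⟩

end IsometryGroup

theorem finite_isometryGroup_of_posDef {m : Type*} [Fintype m] [DecidableEq m] {S : Matrix m m ℤ}
    (hS : S.PosDef) : Finite (isometryGroup S) := by
  have hcols : {M : m → m → ℤ | ∀ j, M j ⬝ᵥ S *ᵥ M j ≤ S j j}.Finite :=
    Set.Finite.pi' fun j => finite_setOf_dotProduct_mulVec_le_of_posDef hS (S j j)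
  have hmaps : Set.MapsTo (fun g : isometryGroup S => g.1.1ᵀ) Set.univ
      {M | ∀ j, M j ⬝ᵥ S *ᵥ M j ≤ S j j} := by
    refine fun g _ j => le_of_eq ?_
    calc g.1.1ᵀ j ⬝ᵥ S *ᵥ g.1.1ᵀ j
        = (g.1.1 *ᵥ Pi.single j 1) ⬝ᵥ S *ᵥ (g.1.1 *ᵥ Pi.single j 1) := by
          simp only [mulVec_single_one, col]
      _ = Pi.single j 1 ⬝ᵥ S *ᵥ Pi.single j 1 := dotProduct_mulVec_of_mem_isometryGroup g.2 _ _
      _ = S j j := by rw [mulVec_single_one, single_one_dotProduct, col_apply]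
  refine Set.finite_univ_iff.mp (.of_injOn hmaps (fun g _ h _ hgh => ?_) hcols)
  exact Subtype.ext (Units.ext (transpose_injective hgh))

section Majorant

variable {m R : Type*} [Fintype m] [CommRing R]

/-- The Gram matrix of the form `v ↦ -Q[y] Q[v] + 2 (vᵀQy)²`. When `Q` is Lorentzian and `Q[y] < 0`,
it is positive definite and, up to the factor `-Q[y]`, arises from `Q` by changing the sign on the
line through `y`. -/
def majorant (Q : Matrix m m R) (y : m → R) : Matrix m m R :=
  -(y ⬝ᵥ Q *ᵥ y) • Q + (2 : R) • vecMulVec (Q *ᵥ y) (Q *ᵥ y)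

variable {Q : Matrix m m R} {y : m → R}

theorem isSymm_majorant (hQ : Q.IsSymm) (y : m → R) : (majorant Q y).IsSymm :=
  (hQ.smul _).add (.smul (transpose_vecMulVec _ _) _)

theorem dotProduct_majorant_mulVec (y v : m → R) :
    v ⬝ᵥ majorant Q y *ᵥ v = -(y ⬝ᵥ Q *ᵥ y) * (v ⬝ᵥ Q *ᵥ v) + 2 * (v ⬝ᵥ Q *ᵥ y) ^ 2 := by
  simp only [majorant, add_mulVec, smul_mulVec, dotProduct_add, dotProduct_smul, smul_eq_mul,
    vecMulVec_mulVec, op_smul_eq_smul, dotProduct_comm (Q *ᵥ y) v]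
  ring

/-- The component of `v` orthogonal to `y`, scaled by `-Q[y]` to avoid division. -/
def scaledOrthogonalPart (Q : Matrix m m R) (y v : m → R) : m → R :=
  (v ⬝ᵥ Q *ᵥ y) • y - (y ⬝ᵥ Q *ᵥ y) • v

theorem scaledOrthogonalPart_dotProduct_mulVec (v : m → R) :
    scaledOrthogonalPart Q y v ⬝ᵥ Q *ᵥ y = 0 := by
  simp only [scaledOrthogonalPart, sub_dotProduct, smul_dotProduct, smul_eq_mul]
  ring

theorem neg_mul_dotProduct_majorant_mulVec (hQ : Q.IsSymm) (v : m → R) :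
    -(y ⬝ᵥ Q *ᵥ y) * (v ⬝ᵥ majorant Q y *ᵥ v) =
      scaledOrthogonalPart Q y v ⬝ᵥ Q *ᵥ scaledOrthogonalPart Q y v +
        -(y ⬝ᵥ Q *ᵥ y) * (v ⬝ᵥ Q *ᵥ y) ^ 2 := by
  simp only [dotProduct_majorant_mulVec, scaledOrthogonalPart, mulVec_sub, mulVec_smul,
    dotProduct_sub, sub_dotProduct, dotProduct_smul, smul_dotProduct, smul_eq_mul,
    dotProduct_mulVec_comm_of_isSymm hQ y v]
  ring

theorem posDef_majorant [LinearOrder R] [IsStrictOrderedRing R] [StarRing R] [TrivialStar R]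
    (hQ : Q.IsSymm) (hy : y ⬝ᵥ Q *ᵥ y < 0)
    (hperp : ∀ v, v ≠ 0 → v ⬝ᵥ Q *ᵥ y = 0 → 0 < v ⬝ᵥ Q *ᵥ v) : (majorant Q y).PosDef := by
  refine .of_dotProduct_mulVec_pos (isHermitian_iff_isSymm.mpr (isSymm_majorant hQ y))
    fun v hv => ?_
  have hy_neg : 0 < -(y ⬝ᵥ Q *ᵥ y) := neg_pos.mpr hy
  rw [star_trivial]
  refine pos_of_mul_pos_right ?_ hy_neg.le
  rw [neg_mul_dotProduct_majorant_mulVec hQ]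
  rcases eq_or_ne (scaledOrthogonalPart Q y v) 0 with hw | hw
  · have hvy : v ⬝ᵥ Q *ᵥ y ≠ 0 := by
      intro hvy
      rw [scaledOrthogonalPart, hvy, zero_smul, zero_sub, neg_eq_zero] at hw
      exact smul_ne_zero hy.ne hv hw
    rw [hw, zero_dotProduct, zero_add]
    exact mul_pos hy_neg (sq_pos_of_ne_zero hvy)
  · exact add_pos_of_pos_of_nonneg (hperp _ hw (scaledOrthogonalPart_dotProduct_mulVec v))
      (mul_nonneg hy_neg.le (sq_nonneg _))

theorem mem_isometryGroup_majorant [DecidableEq m] {g : GL m R} (hg : g ∈ isometryGroup Q)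
    (hgy : g.1 *ᵥ y = y) : g ∈ isometryGroup (majorant Q y) := by
  have hgQ : g.1ᵀ *ᵥ (Q *ᵥ y) = Q *ᵥ y := by
    conv_lhs => rw [← hgy]
    rw [mulVec_mulVec, mulVec_mulVec, mem_isometryGroup_iff.mp hg]
  rw [mem_isometryGroup_iff, majorant, Matrix.mul_add, Matrix.add_mul, Matrix.mul_smul,
    Matrix.smul_mul, mem_isometryGroup_iff.mp hg, Matrix.mul_smul, Matrix.smul_mul, mul_vecMulVec,
    vecMulVec_mul, ← mulVec_transpose, hgQ]

end Majorant

theorem finite_stabilizer_isometryGroup_of_posDef_majorant {m : Type*} [Fintype m] [DecidableEq m]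
    {Q : Matrix m m ℤ} {y : m → ℤ} (hQy : (majorant Q y).PosDef) :
    Finite (MulAction.stabilizer (isometryGroup Q) y) := by
  have := finite_isometryGroup_of_posDef hQy
  refine .of_injective (fun g : MulAction.stabilizer (isometryGroup Q) y =>
    (⟨g.1.1, mem_isometryGroup_majorant g.1.2 g.2⟩ : isometryGroup (majorant Q y))) ?_
  exact fun g h hgh => Subtype.ext (Subtype.ext (Subtype.mk.inj hgh))

section Lorentzian

variable {ι R : Type*} [CommRing R]

/-- The Gram matrix `diag(A, -a)`. -/
def lorentzForm (A : Matrix ι ι R) (a : R) : Matrix (ι ⊕ Unit) (ι ⊕ Unit) R :=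
  fromBlocks A 0 0 (of fun _ _ => -a)

theorem isSymm_lorentzForm {A : Matrix ι ι R} (hA : A.IsSymm) (a : R) :
    (lorentzForm A a).IsSymm :=
  hA.fromBlocks transpose_zero rfl

variable [Fintype ι] {A : Matrix ι ι R}

theorem dotProduct_lorentzForm_mulVec (a : R) (x y : ι ⊕ Unit → R) :
    x ⬝ᵥ lorentzForm A a *ᵥ y =
      (x ∘ Sum.inl) ⬝ᵥ A *ᵥ (y ∘ Sum.inl) - a * (x (Sum.inr ()) * y (Sum.inr ())) := by
  have hlast : (of fun _ _ => -a) *ᵥ (y ∘ Sum.inr) = fun _ : Unit => -a * y (Sum.inr ()) := by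
    ext
    simp [mulVec, dotProduct]
  conv_lhs => rw [← Sum.elim_comp_inl_inr x, lorentzForm, fromBlocks_mulVec,
    sumElim_dotProduct_sumElim, zero_mulVec, zero_mulVec, add_zero, zero_add, hlast]
  simp only [dotProduct, Finset.univ_unique, Finset.sum_singleton, Function.comp_apply,
    PUnit.default_eq_unit]
  ring

theorem dotProduct_lorentzForm_mulVec_pos [LinearOrder R] [IsStrictOrderedRing R] [StarRing R]
    [TrivialStar R] (hA : A.PosDef) {a : R} {v y : ι ⊕ Unit → R}
    (hy : y ⬝ᵥ lorentzForm A a *ᵥ y < 0) (hv : v ≠ 0) (hvy : v ⬝ᵥ lorentzForm A a *ᵥ y = 0) :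
    0 < v ⬝ᵥ lorentzForm A a *ᵥ v := by
  rw [dotProduct_lorentzForm_mulVec] at hy hvy ⊢
  set s := y (Sum.inr ())
  set r := v (Sum.inr ())
  have hy_nonneg : 0 ≤ (y ∘ Sum.inl) ⬝ᵥ A *ᵥ (y ∘ Sum.inl) := by
    simpa using hA.posSemidef.dotProduct_mulVec_nonneg (y ∘ Sum.inl)
  have has : 0 < a * (s * s) := by linarith
  rcases eq_or_ne (v ∘ Sum.inl) 0 with hv0 | hv0
  · have hr0 : r = 0 := by
      rw [hv0, zero_dotProduct, zero_sub, neg_eq_zero, mul_left_comm] at hvy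
      exact (mul_eq_zero.mp hvy).resolve_right fun h => has.ne' (by rw [← mul_assoc, h, zero_mul])
    refine absurd (funext ?_) hv
    rintro (i | _)
    exacts [congrFun hv0 i, hr0]
  · have hv_pos : 0 < (v ∘ Sum.inl) ⬝ᵥ A *ᵥ (v ∘ Sum.inl) := by
      simpa using hA.dotProduct_mulVec_pos hv0
    refine sub_pos.mpr (lt_of_mul_lt_mul_right ?_ has.le)
    calc a * (r * r) * (a * (s * s)) = (a * (r * s)) ^ 2 := by ring
      _ = ((v ∘ Sum.inl) ⬝ᵥ A *ᵥ (y ∘ Sum.inl)) ^ 2 := by rw [sub_eq_zero.mp hvy]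
      _ ≤ ((v ∘ Sum.inl) ⬝ᵥ A *ᵥ (v ∘ Sum.inl)) * ((y ∘ Sum.inl) ⬝ᵥ A *ᵥ (y ∘ Sum.inl)) :=
          sq_dotProduct_mulVec_le_of_posSemidef hA.posSemidef _ _
      _ < ((v ∘ Sum.inl) ⬝ᵥ A *ᵥ (v ∘ Sum.inl)) * (a * (s * s)) :=
          mul_lt_mul_of_pos_left (sub_neg.mp hy) hv_pos

theorem finite_setOf_lorentzForm_le {A : Matrix ι ι ℤ} (hA : A.PosDef) (a C : ℤ) {s : Set ℤ}
    (hs : s.Finite) :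
    {x : ι ⊕ Unit → ℤ | x ⬝ᵥ lorentzForm A a *ᵥ x ≤ C ∧ x (Sum.inr ()) ∈ s}.Finite := by
  have hslices : (⋃ c ∈ s, (fun u => Sum.elim u fun _ : Unit => c) ''
      {u : ι → ℤ | u ⬝ᵥ A *ᵥ u ≤ C + a * (c * c)}).Finite :=
    hs.biUnion fun c _ => (finite_setOf_dotProduct_mulVec_le_of_posDef hA _).image _
  refine hslices.subset fun x ⟨hx, hxs⟩ => Set.mem_biUnion hxs ⟨x ∘ Sum.inl, ?_, ?_⟩
  · rw [dotProduct_lorentzForm_mulVec] at hx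
    exact sub_le_iff_le_add.mp hx
  · exact Sum.elim_comp_inl_inr x

theorem finite_stabilizer_isometryGroup_lorentzForm [DecidableEq ι] {A : Matrix ι ι ℤ}
    (hA : A.PosDef) {a : ℤ} {y : ι ⊕ Unit → ℤ} (hy : y ⬝ᵥ lorentzForm A a *ᵥ y < 0) :
    Finite (MulAction.stabilizer (isometryGroup (lorentzForm A a)) y) :=
  finite_stabilizer_isometryGroup_of_posDef_majorant <|
    posDef_majorant (isSymm_lorentzForm (isHermitian_iff_isSymm.mp hA.isHermitian) a) hy
      fun _ => dotProduct_lorentzForm_mulVec_pos hA hy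

end Lorentzian

/-- Let `F ⊆ R(Q,−k)` be a finite set containing exactly one element of each
`Γ_Q`-orbit of `R(Q,−k)`.  Then for every `t > 0` each set
`{g ∈ Γ_Q : |(g·y)_{n+1}| ≤ t}` (`y ∈ F`) is finite, and
`N_t(Q,−k) = Σ_{y∈F} #{g ∈ Γ_Q : |(g·y)_{n+1}| ≤ t} / #Γ_{Q,y}`.
Here `Q = diag(A, -a)` with `A` symmetric positive definite over `ℤ` and
`Γ_Q = {g ∈ GL(n+1, ℤ) : gᵀ Q g = Q}`. -/
theorem counting_identity_real (n : ℕ) (hn : 1 ≤ n)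
    (A : Matrix (Fin n) (Fin n) ℤ) (hAsymm : A.IsSymm)
    (hApos : ∀ x : Fin n → ℤ, x ≠ 0 → 0 < x ⬝ᵥ A.mulVec x)
    (a : ℤ) (ha : 0 < a) (k : ℤ) (hk : 0 < k)
    (Q : Matrix (Fin n ⊕ Unit) (Fin n ⊕ Unit) ℤ)
    (hQ : Q = Matrix.fromBlocks A 0 0 (Matrix.of fun _ _ => -a))
    (F : Finset ((Fin n ⊕ Unit) → ℤ))
    (hF1 : ∀ y ∈ F, y ⬝ᵥ Q.mulVec y = -k)
    (hF2 : ∀ x : (Fin n ⊕ Unit) → ℤ, x ⬝ᵥ Q.mulVec x = -k →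
      ∃! y : (Fin n ⊕ Unit) → ℤ, y ∈ F ∧
        ∃ g : Matrix (Fin n ⊕ Unit) (Fin n ⊕ Unit) ℤ,
          IsUnit g.det ∧ gᵀ * Q * g = Q ∧ g.mulVec y = x)
    (t : ℝ) (ht : 0 < t) :
    (∀ y ∈ F, {g : Matrix (Fin n ⊕ Unit) (Fin n ⊕ Unit) ℤ |
        IsUnit g.det ∧ gᵀ * Q * g = Q ∧ |((g.mulVec y) (Sum.inr ()) : ℝ)| ≤ t}.Finite) ∧
    (Nat.card {x : (Fin n ⊕ Unit) → ℤ |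
        x ⬝ᵥ Q.mulVec x = -k ∧ |(x (Sum.inr ()) : ℝ)| ≤ t} : ℚ) =
      ∑ y ∈ F,
        (Nat.card {g : Matrix (Fin n ⊕ Unit) (Fin n ⊕ Unit) ℤ |
            IsUnit g.det ∧ gᵀ * Q * g = Q ∧ |((g.mulVec y) (Sum.inr ()) : ℝ)| ≤ t} : ℚ) /
        (Nat.card {g : Matrix (Fin n ⊕ Unit) (Fin n ⊕ Unit) ℤ |
            IsUnit g.det ∧ gᵀ * Q * g = Q ∧ g.mulVec y = y} : ℚ) := by
  obtain rfl : Q = lorentzForm A a := hQ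
  have hA : A.PosDef := .of_dotProduct_mulVec_pos (isHermitian_iff_isSymm.mpr hAsymm) hApos
  let Γ := isometryGroup (lorentzForm A a)
  let X := {x | x ⬝ᵥ lorentzForm A a *ᵥ x = -k ∧ |(x (Sum.inr ()) : ℝ)| ≤ t}
  have hX : X.Finite :=
    (finite_setOf_lorentzForm_le hA a (-k) (Set.finite_Icc (-⌊t⌋) ⌊t⌋)).subset fun x hx =>
      ⟨hx.1.le, abs_le.mp (Int.le_floor.mpr (by exact_mod_cast hx.2))⟩
  have hstab (y) (hy : y ∈ F) : Finite (MulAction.stabilizer Γ y) :=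
    finite_stabilizer_isometryGroup_lorentzForm hA ((hF1 y hy).trans_lt (neg_lt_zero.mpr hk))
  have hF (x) (hx : x ∈ X) : ∃! y, y ∈ F ∧ x ∈ MulAction.orbit Γ y := by
    simpa only [Γ, mem_orbit_isometryGroup_iff] using hF2 x hx.1
  have hcarry (y) (hy : y ∈ F) :
      {g : Γ | |((g.1.1 *ᵥ y) (Sum.inr ()) : ℝ)| ≤ t} = {g : Γ | g • y ∈ X} :=
    Set.ext fun g => (and_iff_right <|
      (dotProduct_mulVec_of_mem_isometryGroup g.2 y y).trans (hF1 y hy)).symm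
  refine ⟨fun y hy => ?_, ?_⟩
  · rw [setOf_isUnit_det_and_isometry_eq_image, hcarry y hy]
    have := hstab y hy
    exact (finite_setOf_smul_mem hX).image _
  · refine (natCard_eq_sum_natCard_div_natCard_stabilizer hX hF hstab).trans
      (Finset.sum_congr rfl fun y hy => ?_)
    rw [natCard_setOf_isUnit_det_and_isometry, natCard_setOf_isUnit_det_and_isometry, hcarry y hy]
    rfl
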